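/- For every fixed x > 0, the function p ↦ ζ(p, x) is log-convex on (1,∞), and the function p ↦ (p − 1) ζ(p, x) is log-concave on (1,∞). -/

import Mathlib

/-!
Log-convexity of `p ↦ ζ(p, x)` holds because each term `(k + x) ^ (-p)` is log-linear in `p` and a
sum of log-convex functions is log-convex (`convexOn_log_hzeta`).

For the second claim, expanding `1 / (1 - e^{-t})` into a geometric series gives
`(p - 1) ζ(p, x) = (1 / Γ(p - 1)) ∫₀^∞ t^{p-2} g(t) dt` with `g(t) = t e^{-xt} / (1 - e^{-t})`
(`integral_hkernel`). The function `g` is log-concave because `u ≤ sinh u` for `u ≥ 0`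
(`concaveOn_log_hkernel`), so it suffices to prove Borell's theorem that
`s ↦ (1 / Γ(s)) ∫₀^∞ t^{s-1} g(t) dt` is log-concave for log-concave `g`
(`concaveOn_log_mellin_div_Gamma`).

That theorem follows from a comparison with exponentials. Given `p < s < q`, choose `e(t) = C e^{-λt}`
whose transform agrees with that of `g` at `p` and `q`; since the normalized transform `C λ^{-s}` of
`e` is log-linear, the claim is `∫ t^{s-1} (g - e) ≥ 0`. As `g / e` is log-concave, `g ≥ e` exactly
on an interval. Subtracting suitable multiples of the vanishing integrals `∫ t^{p-1} (g - e)` and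
`∫ t^{q-1} (g - e)` replaces `t^{s-1}` by `t^{p-1} (u^θ - α - β u)` with `u = t^{q-p}` and
`0 < θ < 1`. By concavity of `u^θ`, the line `α + β u` can be chosen so that this factor is
nonnegative on that interval and nonpositive off it (`exists_affine_rpow_sign`), which makes the
integrand nonnegative everywhere.
-/


open Real Set

/-- The Hurwitz zeta function `ζ(p, x) = ∑_{k=0}^∞ (k + x)^{-p}`. -/
noncomputable def hzeta (p x : ℝ) : ℝ :=
  ∑' k : ℕ, ((k : ℝ) + x) ^ (-p)

/-! ### Mellin transforms of log-concave functions -/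

/-- On `(0, ∞)`, an affine function can be fitted to the concave power `t ^ θ` so that the
difference changes sign exactly at the endpoints of a prescribed interval `A`, which may be empty,
degenerate, or reach `0` or `∞`. -/
lemma exists_affine_rpow_sign {θ : ℝ} (h0 : 0 < θ) (h1 : θ < 1) {A : Set ℝ}
    (hA : A.OrdConnected) (hpos : A ⊆ Ioi 0) :
    ∃ a b : ℝ, (∀ t ∈ A, a + b * t ≤ t ^ θ) ∧ ∀ t, 0 < t → t ∉ A → t ^ θ ≤ a + b * t := by
  by_cases hsub : ∃ α, 0 < α ∧ A ⊆ {α}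
  · -- At most one point: the tangent line there.
    obtain ⟨α, hα, hAα⟩ := hsub
    have key : ∀ t, 0 < t → t ^ θ ≤ α ^ θ * (1 - θ) + α ^ θ * θ / α * t := by
      intro t ht
      have h := rpow_one_add_le_one_add_mul_self (s := t / α - 1)
        (by have : 0 < t / α := by positivity
            linarith) h0.le h1.le
      rw [add_sub_cancel, div_rpow ht.le hα.le, div_le_iff₀ (by positivity)] at h
      refine h.trans (le_of_eq ?_)
      field_simp
      ring
    refine ⟨α ^ θ * (1 - θ), α ^ θ * θ / α, ?_, fun t ht _ => key t ht⟩
    intro t ht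
    obtain rfl : t = α := hAα ht
    refine le_of_eq ?_
    field_simp
    ring
  have hne : A.Nonempty := by
    by_contra h
    rw [not_nonempty_iff_eq_empty] at h
    exact hsub ⟨1, one_pos, by simp [h]⟩
  have hbdd : BddBelow A := ⟨0, fun t ht => (hpos ht).le⟩
  set α := sInf A with hαdef
  have hα0 : 0 ≤ α := le_csInf hne fun t ht => (hpos ht).le
  by_cases hB : BddAbove A
  · -- A bounded nondegenerate interval: the chord through its endpoints.
    set β := sSup A with hβdef
    have hαβ : α < β := by
      by_contra! hle
      obtain ⟨t₀, ht₀⟩ := hne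
      refine hsub ⟨t₀, hpos ht₀, fun t ht => ?_⟩
      have e1 := csInf_le hbdd ht
      have e2 := csInf_le hbdd ht₀
      have e3 := le_csSup hB ht
      have e4 := le_csSup hB ht₀
      exact le_antisymm (by linarith) (by linarith)
    have hc : ConcaveOn ℝ (Ici 0) fun t : ℝ => t ^ θ := Real.concaveOn_rpow h0.le h1.le
    have hβ0 : 0 ≤ β := hα0.trans hαβ.le
    have hd : 0 < β - α := sub_pos.2 hαβ
    set b := (β ^ θ - α ^ θ) / (β - α) with hb
    have hbe : b * (β - α) = β ^ θ - α ^ θ := div_mul_cancel₀ _ hd.ne'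
    refine ⟨α ^ θ - b * α, b, fun t ht => ?_, fun t ht htA => ?_⟩
    · have e1 : α ≤ t := csInf_le hbdd ht
      have e2 : t ≤ β := le_csSup hB ht
      rcases e1.eq_or_lt with h | h1
      · rw [← h]; linarith
      rcases e2.eq_or_lt with h | h2
      · rw [h]; linarith
      have h := hc.slope_anti_adjacent hα0 hβ0 h1 h2
      rw [div_le_div_iff₀ (by linarith) (by linarith)] at h
      have : 0 ≤ (β - α) * (t ^ θ - (α ^ θ - b * α + b * t)) := by
        linear_combination h + (t - α) * hbe
      have := nonneg_of_mul_nonneg_right this hd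
      linarith
    · have : t ≤ α ∨ β ≤ t := by
        by_contra! h
        obtain ⟨u, hu, hut⟩ := exists_lt_of_csInf_lt hne h.1
        obtain ⟨v, hv, htv⟩ := exists_lt_of_lt_csSup hne h.2
        exact htA (hA.out hu hv ⟨hut.le, htv.le⟩)
      rcases this with h | h
      · rcases h.eq_or_lt with h | h
        · rw [h]; linarith
        have h := hc.slope_anti_adjacent (mem_Ici.2 ht.le) hβ0 h hαβ
        rw [← hb, le_div_iff₀ (by linarith)] at h
        linarith
      · rcases h.eq_or_lt with h | h
        · rw [← h]; linarith
        have h := hc.slope_anti_adjacent hα0 (mem_Ici.2 ht.le) hαβ h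
        rw [← hb, div_le_iff₀ (by linarith)] at h
        linarith
  · -- Unbounded above: the horizontal line through the left endpoint.
    refine ⟨α ^ θ, 0, fun t ht => ?_, fun t ht htA => ?_⟩
    · have := rpow_le_rpow hα0 (csInf_le hbdd ht) h0.le
      linarith
    · have : t ≤ α := by
        by_contra! h
        obtain ⟨u, hu, hut⟩ := exists_lt_of_csInf_lt hne h
        obtain ⟨v, hv, htv⟩ := not_bddAbove_iff.1 hB t
        exact htA (hA.out hu hv ⟨hut.le, htv.le⟩)
      have := rpow_le_rpow ht.le this h0.le
      linarith

/-- The Mellin transform of an exponential, divided by `Γ`, is log-linear in the exponent. -/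
lemma mellin_exp (c l : ℝ) {s : ℝ} (hs : 0 < s) :
    ∫ t in Ioi (0 : ℝ), t ^ (s - 1) * exp (c - exp l * t) = exp (c - s * l) * Gamma s := by
  have : ∀ t : ℝ, t ^ (s - 1) * exp (c - exp l * t)
      = exp c * (t ^ (s - 1) * exp (-(exp l * t))) := by
    intro t
    rw [sub_eq_add_neg c, exp_add]; ring
  simp_rw [this]
  rw [MeasureTheory.integral_const_mul, integral_rpow_mul_exp_neg_mul_Ioi hs (exp_pos l), one_div,
    ← exp_neg, ← exp_mul, ← mul_assoc, ← exp_add]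
  ring_nf

/-- Borell's theorem. For log-concave `g`, the Mellin transform of `g` divided by the Gamma
function is log-concave. -/
theorem concaveOn_log_mellin_div_Gamma {g : ℝ → ℝ} (hpos : ∀ t, 0 < t → 0 < g t)
    (hg : ConcaveOn ℝ (Ioi 0) fun t => log (g t))
    (hint : ∀ s : ℝ, 0 < s → MeasureTheory.IntegrableOn (fun t => t ^ (s - 1) * g t) (Ioi 0))
    (hI : ∀ s : ℝ, 0 < s → 0 < ∫ t in Ioi (0 : ℝ), t ^ (s - 1) * g t) :
    ConcaveOn ℝ (Ioi 0)
      fun s => log ((∫ t in Ioi (0 : ℝ), t ^ (s - 1) * g t) / Gamma s) := by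
  set I : ℝ → ℝ := fun s => ∫ t in Ioi (0 : ℝ), t ^ (s - 1) * g t with hIdef
  refine LinearOrder.concaveOn_of_lt (convex_Ioi 0) ?_
  intro p hp q hq hpq a b ha hb hab
  rw [mem_Ioi] at hp hq
  simp only [smul_eq_mul]
  set s := a * p + b * q with hs
  have hs0 : 0 < s := by positivity
  have hD : 0 < q - p := sub_pos.2 hpq
  set P := log (I p / Gamma p) with hP
  set Q := log (I q / Gamma q) with hQ
  have hIp : I p = exp P * Gamma p := by
    rw [hP, exp_log (div_pos (hI p hp) (Gamma_pos_of_pos hp)),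
      div_mul_cancel₀ _ (Gamma_pos_of_pos hp).ne']
  have hIq : I q = exp Q * Gamma q := by
    rw [hQ, exp_log (div_pos (hI q hq) (Gamma_pos_of_pos hq)),
      div_mul_cancel₀ _ (Gamma_pos_of_pos hq).ne']
  -- The exponential `exp (c - exp l * t)` has the same Mellin transform as `g` at `p` and at `q`.
  set l := (P - Q) / (q - p) with hl
  set c := P + p * l with hc
  have hlD : l * (q - p) = P - Q := div_mul_cancel₀ _ hD.ne'
  have hcp : c - p * l = P := by rw [hc]; ring
  have hcq : c - q * l = Q := by linear_combination -hlD
  have hcs : c - s * l = a * P + b * Q := by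
    rw [hs]; linear_combination a * hcp + b * hcq - c * hab
  set e : ℝ → ℝ := fun t => exp (c - exp l * t) with he
  have heint : ∀ r : ℝ, 0 < r → MeasureTheory.IntegrableOn (fun t => t ^ (r - 1) * e t) (Ioi 0) := by
    intro r hr
    refine MeasureTheory.Integrable.of_integral_ne_zero ?_
    rw [mellin_exp c l hr]
    exact (mul_pos (exp_pos _) (Gamma_pos_of_pos hr)).ne'
  have hJint : ∀ r : ℝ, 0 < r →
      MeasureTheory.IntegrableOn (fun t => t ^ (r - 1) * g t - t ^ (r - 1) * e t) (Ioi 0) :=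
    fun r hr => (hint r hr).sub (heint r hr)
  have hJ : ∀ r : ℝ, 0 < r → ∫ t in Ioi (0 : ℝ), (t ^ (r - 1) * g t - t ^ (r - 1) * e t)
      = I r - exp (c - r * l) * Gamma r := by
    intro r hr
    rw [MeasureTheory.integral_sub (hint r hr) (heint r hr), ← mellin_exp c l hr]
  -- By log-concavity of `g`, the set where `g ≥ e` is an interval.
  have hconv : Convex ℝ {t ∈ Ioi (0 : ℝ) | c ≤ log (g t) + exp l * t} := by
    refine ConcaveOn.convex_ge (hg.add ⟨convex_Ioi 0, ?_⟩) c
    intro x _ y _ a b _ _ _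
    simp only [smul_eq_mul]
    exact le_of_eq (by ring)
  set A : Set ℝ := {t ∈ Ioi (0 : ℝ) | c ≤ log (g t) + exp l * t} with hAdef
  have hA := hconv.ordConnected
  -- The same interval in the variable `u = t ^ (q - p)`.
  obtain ⟨α, β, h1, h2⟩ := exists_affine_rpow_sign hb (by linarith : b < 1)
    (A := {u : ℝ | 0 < u ∧ u ^ (q - p)⁻¹ ∈ A})
    ⟨fun u hu v hv w hw => ⟨hu.1.trans_le hw.1, hA.out hu.2 hv.2
      ⟨rpow_le_rpow hu.1.le hw.1 (by positivity),
        rpow_le_rpow (hu.1.le.trans hw.1) hw.2 (by positivity)⟩⟩⟩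
    (fun u hu => hu.1)
  have hpt : ∀ t ∈ Ioi (0 : ℝ), 0 ≤ (t ^ (s - 1) * g t - t ^ (s - 1) * e t)
      - α * (t ^ (p - 1) * g t - t ^ (p - 1) * e t)
      - β * (t ^ (q - 1) * g t - t ^ (q - 1) * e t) := by
    intro t ht
    rw [mem_Ioi] at ht
    have hu : 0 < t ^ (q - p) := rpow_pos_of_pos ht _
    have hut : (t ^ (q - p)) ^ (q - p)⁻¹ = t := rpow_rpow_inv ht.le hD.ne'
    have eq1 : t ^ (q - 1) = t ^ (p - 1) * t ^ (q - p) := by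
      rw [← rpow_add ht]; congr 1; ring
    have eq2 : t ^ (s - 1) = t ^ (p - 1) * (t ^ (q - p)) ^ b := by
      rw [← rpow_mul ht.le, ← rpow_add ht]; congr 1
      rw [hs]; linear_combination p * hab
    have : (t ^ (s - 1) * g t - t ^ (s - 1) * e t)
        - α * (t ^ (p - 1) * g t - t ^ (p - 1) * e t)
        - β * (t ^ (q - 1) * g t - t ^ (q - 1) * e t)
        = t ^ (p - 1) * ((g t - e t) * ((t ^ (q - p)) ^ b - (α + β * t ^ (q - p)))) := by
      rw [eq1, eq2]; ring
    rw [this]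
    refine mul_nonneg (rpow_pos_of_pos ht _).le ?_
    by_cases htA : t ∈ A
    · refine mul_nonneg (sub_nonneg.2 ?_) (sub_nonneg.2 (h1 _ ⟨hu, by rwa [hut]⟩))
      rw [← exp_log (hpos t ht)]
      exact exp_le_exp.2 (by linarith [htA.2])
    · refine mul_nonneg_of_nonpos_of_nonpos (sub_nonpos.2 ?_)
        (sub_nonpos.2 (h2 _ hu fun h => htA (by have := h.2; rwa [hut] at this)))
      rw [← exp_log (hpos t ht)]
      refine exp_le_exp.2 ?_
      have : ¬ (c ≤ log (g t) + exp l * t) := fun h => htA ⟨ht, h⟩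
      linarith
  have hsub : MeasureTheory.IntegrableOn (fun t => (t ^ (s - 1) * g t - t ^ (s - 1) * e t)
      - α * (t ^ (p - 1) * g t - t ^ (p - 1) * e t)) (Ioi 0) :=
    (hJint s hs0).sub ((hJint p hp).const_mul α)
  have hmain := MeasureTheory.setIntegral_nonneg (μ := MeasureTheory.volume)
    measurableSet_Ioi hpt
  rw [MeasureTheory.integral_sub hsub ((hJint q hq).const_mul β),
    MeasureTheory.integral_sub (hJint s hs0) ((hJint p hp).const_mul α),
    MeasureTheory.integral_const_mul, MeasureTheory.integral_const_mul, hJ s hs0, hJ p hp, hJ q hq,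
    hcp, hcq, hcs, hIp, hIq] at hmain
  change a * P + b * Q ≤ log (I s / Gamma s)
  rw [le_log_iff_exp_le (div_pos (hI s hs0) (Gamma_pos_of_pos hs0)),
    le_div_iff₀ (Gamma_pos_of_pos hs0)]
  linarith

/-! ### The kernel of the integral representation -/

/-- The function `t e^{-xt} / (1 - e^{-t})`, whose Mellin transform at `p - 1` is `Γ(p) ζ(p, x)`. -/
noncomputable def hkernel (x t : ℝ) : ℝ := t * exp (-(x * t)) / (1 - exp (-t))

lemma one_sub_exp_neg_pos {t : ℝ} (ht : 0 < t) : 0 < 1 - exp (-t) := by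
  have : exp (-t) < 1 := exp_lt_one_iff.2 (by linarith)
  linarith

lemma hkernel_pos (x : ℝ) {t : ℝ} (ht : 0 < t) : 0 < hkernel x t :=
  div_pos (mul_pos ht (exp_pos _)) (one_sub_exp_neg_pos ht)

/-- The second derivative of `log (t / (1 - e^{-t}))` is `-1/t² + e^t/(e^t - 1)²`, and its sign
is the inequality `t / 2 ≤ sinh (t / 2)`. -/
lemma concaveOn_log_hkernel (x : ℝ) : ConcaveOn ℝ (Ioi 0) fun t => log (hkernel x t) := by
  have hE : ∀ t : ℝ, 0 < t → 0 < exp t - 1 := fun t ht => by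
    have := one_lt_exp_iff.2 ht
    linarith
  have hd : ∀ t : ℝ, 0 < t →
      HasDerivAt (fun t => log t - x * t - log (1 - exp (-t)))
        (t⁻¹ - x - (exp t - 1)⁻¹) t := by
    intro t ht
    have h1 : HasDerivAt (fun t : ℝ => 1 - exp (-t)) (exp (-t)) t := by
      simpa using ((hasDerivAt_id t).neg.exp).const_sub 1
    have h2 := ((hasDerivAt_log ht.ne').sub ((hasDerivAt_id t).const_mul x)).sub
      (h1.log (one_sub_exp_neg_pos ht).ne')
    refine h2.congr_deriv ?_
    have : exp (-t) / (1 - exp (-t)) = (exp t - 1)⁻¹ := by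
      rw [div_eq_iff (one_sub_exp_neg_pos ht).ne', inv_mul_eq_div,
        eq_div_iff (hE t ht).ne', mul_sub, ← exp_add]
      simp
    rw [this]; ring
  have hmain : ConcaveOn ℝ (Ioi 0) fun t => log t - x * t - log (1 - exp (-t)) := by
    refine concaveOn_of_hasDerivWithinAt2_nonpos (convex_Ioi 0)
      (f' := fun t => t⁻¹ - x - (exp t - 1)⁻¹)
      (f'' := fun t => -(t ^ 2)⁻¹ + exp t / (exp t - 1) ^ 2)
      (fun t ht => (hd t ht).continuousAt.continuousWithinAt) ?_ ?_ ?_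
    · rw [interior_Ioi]
      exact fun t ht => (hd t ht).hasDerivWithinAt
    · rw [interior_Ioi]
      intro t ht
      have h1 : HasDerivAt (fun t : ℝ => exp t - 1) (exp t) t := (hasDerivAt_exp t).sub_const 1
      refine HasDerivAt.hasDerivWithinAt ?_
      refine (((hasDerivAt_inv (ne_of_gt ht)).sub_const x).sub
        (h1.inv (hE t ht).ne')).congr_deriv ?_
      ring
    · rw [interior_Ioi]
      intro t ht
      rw [mem_Ioi] at ht
      have hs : t / 2 ≤ sinh (t / 2) := self_le_sinh_iff.2 (by linarith)
      have h2 : exp t - 1 = exp (t / 2) * (2 * sinh (t / 2)) := by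
        rw [sinh_eq]
        have e1 : exp (t / 2) * exp (t / 2) = exp t := by rw [← exp_add]; ring_nf
        have e2 : exp (t / 2) * exp (-(t / 2)) = 1 := by rw [← exp_add]; simp
        linear_combination -e1 + e2
      have h3 : exp t = exp (t / 2) ^ 2 := by rw [← exp_nat_mul]; congr 1; push_cast; ring
      have h4 : t ≤ 2 * sinh (t / 2) := by linarith
      have h5 : exp t / (exp t - 1) ^ 2 ≤ (t ^ 2)⁻¹ := by
        rw [h2, mul_pow, ← h3, div_mul_eq_div_div, div_self (exp_pos t).ne', one_div]
        gcongr
      linarith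
  refine hmain.congr fun t ht => ?_
  rw [mem_Ioi] at ht
  simp only [hkernel]
  rw [log_div (mul_pos ht (exp_pos _)).ne' (one_sub_exp_neg_pos ht).ne',
    log_mul ht.ne' (exp_pos _).ne', log_exp]
  ring

/-! ### The Hurwitz zeta function -/

lemma summable_hzeta {p x : ℝ} (hx : 0 < x) (hp : 1 < p) :
    Summable fun k : ℕ => ((k : ℝ) + x) ^ (-p) := by
  refine ((Real.summable_one_div_nat_add_rpow x p).2 hp).congr fun k => ?_
  have : 0 < (k : ℝ) + x := by positivity
  rw [abs_of_pos this, rpow_neg this.le, one_div]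

lemma hzeta_pos {p x : ℝ} (hx : 0 < x) (hp : 1 < p) : 0 < hzeta p x := by
  refine (summable_hzeta hx hp).tsum_pos (fun k => by positivity) 0 ?_
  have : 0 < ((0 : ℕ) : ℝ) + x := by simpa using hx
  exact rpow_pos_of_pos this _

/-- Termwise Mellin transform of the geometric series for `1 / (1 - e^{-t})`. -/
lemma integral_hkernel {x s : ℝ} (hx : 0 < x) (hs : 0 < s) :
    ∫ t in Ioi (0 : ℝ), t ^ (s - 1) * hkernel x t = hzeta (s + 1) x * Gamma (s + 1) := by
  have hs1 : 0 < s + 1 := by linarith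
  set F : ℕ → ℝ → ℝ := fun k t => t ^ (s + 1 - 1) * exp (-(((k : ℝ) + x) * t)) with hF
  have hk : ∀ k : ℕ, 0 < (k : ℝ) + x := fun k => by positivity
  have hFint : ∀ k, ∫ t in Ioi (0 : ℝ), F k t = ((k : ℝ) + x) ^ (-(s + 1)) * Gamma (s + 1) := by
    intro k
    rw [hF]
    simp only
    rw [integral_rpow_mul_exp_neg_mul_Ioi hs1 (hk k), one_div, inv_rpow (hk k).le,
      rpow_neg (hk k).le]
  have hFi : ∀ k, MeasureTheory.IntegrableOn (F k) (Ioi 0) := fun k =>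
    MeasureTheory.Integrable.of_integral_ne_zero <| by
      rw [hFint k]
      exact (mul_pos (rpow_pos_of_pos (hk k) _) (Gamma_pos_of_pos hs1)).ne'
  have hFn : ∀ k, ∫ t in Ioi (0 : ℝ), ‖F k t‖ = ((k : ℝ) + x) ^ (-(s + 1)) * Gamma (s + 1) := by
    intro k
    rw [← hFint k]
    refine MeasureTheory.setIntegral_congr_fun measurableSet_Ioi fun t ht => ?_
    exact norm_of_nonneg (mul_nonneg (rpow_nonneg (le_of_lt ht) _) (exp_pos _).le)
  have hsum := MeasureTheory.hasSum_integral_of_summable_integral_norm hFi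
    (by simp_rw [hFn]; exact (summable_hzeta hx (by linarith)).mul_right _)
  have h1 : ∫ t in Ioi (0 : ℝ), t ^ (s - 1) * hkernel x t = ∫ t in Ioi (0 : ℝ), ∑' k, F k t := by
    refine MeasureTheory.setIntegral_congr_fun measurableSet_Ioi fun t ht => ?_
    rw [mem_Ioi] at ht
    have h2 : ∀ k, F k t = t ^ (s - 1) * (t * exp (-(x * t))) * exp (-t) ^ k := by
      intro k
      have e1 : t ^ (s + 1 - 1) = t ^ (s - 1) * t := by
        rw [← rpow_add_one ht.ne']; congr 1; ring
      have e2 : exp (-(((k : ℝ) + x) * t)) = exp (-(x * t)) * exp (-t) ^ k := by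
        rw [← exp_nat_mul, ← exp_add]; congr 1; ring
      rw [hF]
      simp only
      rw [e1, e2]; ring
    simp only [h2, hkernel]
    rw [tsum_mul_left, tsum_geometric_of_lt_one (exp_pos _).le (exp_lt_one_iff.2 (by linarith))]
    ring
  rw [h1, ← hsum.tsum_eq]
  simp_rw [hFint]
  rw [tsum_mul_right, hzeta]

lemma convexOn_log_hzeta {x : ℝ} (hx : 0 < x) :
    ConvexOn ℝ (Ioi 1) fun p => log (hzeta p x) := by
  refine ⟨convex_Ioi 1, ?_⟩
  intro p hp q hq a b ha hb hab
  have hs := (convex_Ioi (1 : ℝ)) hp hq ha hb hab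
  simp only [smul_eq_mul, mem_Ioi] at hs hp hq ⊢
  set P := log (hzeta p x) with hP
  set Q := log (hzeta q x) with hQ
  have hPe : exp P = hzeta p x := exp_log (hzeta_pos hx hp)
  have hQe : exp Q = hzeta q x := exp_log (hzeta_pos hx hq)
  rw [log_le_iff_le_exp (hzeta_pos hx hs)]
  set E := exp (a * P + b * Q) with hE
  -- Convexity of `exp`, applied to the terms normalized by `ζ(p, x)` and `ζ(q, x)`.
  have hterm : ∀ k : ℕ, ((k : ℝ) + x) ^ (-(a * p + b * q)) ≤
      E * (a * (exp (-P) * ((k : ℝ) + x) ^ (-p)) + b * (exp (-Q) * ((k : ℝ) + x) ^ (-q))) := by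
    intro k
    have hk : 0 < (k : ℝ) + x := by positivity
    simp only [rpow_def_of_pos hk, ← exp_add]
    set L := log ((k : ℝ) + x)
    have h := convexOn_exp.2 (mem_univ (-P + L * -p)) (mem_univ (-Q + L * -q)) ha hb hab
    simp only [smul_eq_mul] at h
    calc exp (L * -(a * p + b * q))
        = E * exp (a * (-P + L * -p) + b * (-Q + L * -q)) := by
          rw [hE, ← exp_add]; congr 1; ring
      _ ≤ _ := mul_le_mul_of_nonneg_left h (exp_pos _).le
  have hsp := (((summable_hzeta hx hp).mul_left (exp (-P))).mul_left a)
  have hsq := (((summable_hzeta hx hq).mul_left (exp (-Q))).mul_left b)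
  have h := (summable_hzeta hx hs).tsum_le_tsum hterm ((hsp.add hsq).mul_left E)
  rw [tsum_mul_left, hsp.tsum_add hsq, tsum_mul_left, tsum_mul_left, tsum_mul_left,
    tsum_mul_left] at h
  have e1 : exp (-P) * ∑' k : ℕ, ((k : ℝ) + x) ^ (-p) = 1 := by
    change exp (-P) * hzeta p x = 1
    rw [← hPe, ← exp_add]; simp
  have e2 : exp (-Q) * ∑' k : ℕ, ((k : ℝ) + x) ^ (-q) = 1 := by
    change exp (-Q) * hzeta q x = 1
    rw [← hQe, ← exp_add]; simp
  rw [e1, e2, mul_one, mul_one, hab, mul_one] at h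
  exact h

theorem stmt7 (x : ℝ) (hx : 0 < x) :
    ConvexOn ℝ (Set.Ioi 1) (fun p => Real.log (hzeta p x)) ∧
    ConcaveOn ℝ (Set.Ioi 1) (fun p => Real.log ((p - 1) * hzeta p x)) := by
  refine ⟨convexOn_log_hzeta hx, ?_⟩
  have hI : ∀ s : ℝ, 0 < s → 0 < ∫ t in Ioi (0 : ℝ), t ^ (s - 1) * hkernel x t := by
    intro s hs
    rw [integral_hkernel hx hs]
    exact mul_pos (hzeta_pos hx (by linarith)) (Gamma_pos_of_pos (by linarith))
  have h := concaveOn_log_mellin_div_Gamma (fun t => hkernel_pos x) (concaveOn_log_hkernel x)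
    (fun s hs => MeasureTheory.Integrable.of_integral_ne_zero (hI s hs).ne') hI
  refine ⟨convex_Ioi 1, ?_⟩
  -- `Γ(p) / Γ(p - 1) = p - 1` identifies the normalized Mellin transform at `p - 1`.
  have hval : ∀ p : ℝ, 1 < p →
      log ((∫ t in Ioi (0 : ℝ), t ^ (p - 1 - 1) * hkernel x t) / Gamma (p - 1))
        = log ((p - 1) * hzeta p x) := by
    intro p hp
    have h0 : 0 < p - 1 := by linarith
    have hG := (Gamma_pos_of_pos h0).ne'
    rw [integral_hkernel hx h0, Gamma_add_one h0.ne', sub_add_cancel]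
    congr 1
    field_simp
  intro p hp q hq a b ha hb hab
  have hs := (convex_Ioi (1 : ℝ)) hp hq ha hb hab
  simp only [smul_eq_mul, mem_Ioi] at hs hp hq ⊢
  have := h.2 (sub_pos.2 hp) (sub_pos.2 hq) ha hb hab
  simp only [smul_eq_mul] at this
  have e : a * (p - 1) + b * (q - 1) = a * p + b * q - 1 := by linear_combination -hab
  rwa [e, hval p hp, hval q hq, hval _ hs] at this
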